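/- Let P ⊆ ℤ^n_{≥0} be a polymatroid over [n]. Then the sequence of coefficients [y^0]X_P(y), [y^1]X_P(y), …, [y^{r_2(P)−1}]X_P(y) of the exterior polynomial is unimodal: there exists an index k such that [y^i]X_P(y) ≤ [y^{i+1}]X_P(y) for all i < k with i+1 ≤ r_2(P)−1, and [y^i]X_P(y) ≥ [y^{i+1}]X_P(y) for all i > k with i+1 ≤ r_2(P)−1. -/

import Mathlib

open Finset Polynomial

/-- `f` is the rank function of a polymatroid over the ground set `[n]` (encoded as `Fin n`):
normalization, monotonicity and submodularity. -/
def IsPolymatroidRank (n : ℕ) (f : Finset (Fin n) → ℕ) : Prop :=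
  f ∅ = 0 ∧ (∀ I J : Finset (Fin n), I ⊆ J → f I ≤ f J) ∧
    ∀ I J : Finset (Fin n), f (I ∪ J) + f (I ∩ J) ≤ f I + f J

/-- The set of bases of the polymatroid `P ⊆ ℤ^n_{≥0}` with rank function `f`:
all nonnegative integer vectors `a` with `∑_{i ∈ I} a i ≤ f I` for every `I ⊆ [n]`
and `∑_{i ∈ [n]} a i = f [n]`.  (Every such vector has entries `≤ f [n]`, whence the
bounding box used to produce a `Finset`.) -/
def polyBases (n : ℕ) (f : Finset (Fin n) → ℕ) : Finset (Fin n → ℤ) :=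
  ((Finset.univ : Finset (Fin n → Fin (f Finset.univ + 1))).image
      (fun a i => ((a i : ℕ) : ℤ))).filter
    fun a => (∀ i, 0 ≤ a i) ∧ (∀ I : Finset (Fin n), ∑ i ∈ I, a i ≤ (f I : ℤ)) ∧
      ∑ i, a i = (f Finset.univ : ℤ)

/-- The externally active indices of a basis `a`: those `i` such that
`a + e_i - e_j ∉ P` for every `j < i`. -/
def extAct (n : ℕ) (f : Finset (Fin n) → ℕ) (a : Fin n → ℤ) : Finset (Fin n) :=
  Finset.univ.filter fun i => ∀ j, j < i →
    (fun t => a t + (if t = i then 1 else 0) - (if t = j then 1 else 0)) ∉ polyBases n f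

/-- The internally active indices of a basis `a`: those `i` such that
`a - e_i + e_j ∉ P` for every `j < i`. -/
def intAct (n : ℕ) (f : Finset (Fin n) → ℕ) (a : Fin n → ℤ) : Finset (Fin n) :=
  Finset.univ.filter fun i => ∀ j, j < i →
    (fun t => a t - (if t = i then 1 else 0) + (if t = j then 1 else 0)) ∉ polyBases n f

/-- The exterior polynomial `X_P(y) = ∑_{a ∈ P} y^(n - |Ext(a)|)`. -/
noncomputable def exteriorPoly (n : ℕ) (f : Finset (Fin n) → ℕ) : Polynomial ℤ :=
  ∑ a ∈ polyBases n f, X ^ (n - (extAct n f a).card)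

/-- The interior polynomial `I_P(x) = ∑_{a ∈ P} x^(n - |Int(a)|)`. -/
noncomputable def interiorPoly (n : ℕ) (f : Finset (Fin n) → ℕ) : Polynomial ℤ :=
  ∑ a ∈ polyBases n f, X ^ (n - (intAct n f a).card)

/-- `r_k(P) = min { n - |F| : F ⊆ [n], f F ≤ f [n] - k }` (junk value `0` if no such `F`). -/
noncomputable def rk (n : ℕ) (f : Finset (Fin n) → ℕ) (k : ℕ) : ℕ :=
  sInf {m | ∃ F : Finset (Fin n), (f F : ℤ) ≤ (f Finset.univ : ℤ) - k ∧ m = n - F.card}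

/-- `r'_k(P) = min { |F| : F ⊆ [n], ∑_{i ∈ F} f {i} - f F ≥ k }` (junk value `0` if no such `F`). -/
noncomputable def rk' (n : ℕ) (f : Finset (Fin n) → ℕ) (k : ℕ) : ℕ :=
  sInf {m | ∃ F : Finset (Fin n), (k : ℤ) ≤ (∑ i ∈ F, (f {i} : ℤ)) - (f F : ℤ) ∧ m = F.card}

/-- `H_j(P)`: the flats `H` (i.e. `f (H ∪ {e}) > f H` for all `e ∉ H`) with
`f H = f [n] - 1` and `n - |H| = j`. -/
def Hset (n : ℕ) (f : Finset (Fin n) → ℕ) (j : ℕ) : Finset (Finset (Fin n)) :=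
  Finset.univ.filter fun H =>
    (∀ e, e ∉ H → f H < f (insert e H)) ∧ (f H : ℤ) = (f Finset.univ : ℤ) - 1 ∧
      n - H.card = j

/-- `C_j(P)`: the sets `C` with `|C| = j`, `∑_{i ∈ C} f {i} - f C = 1` and
`∑_{i ∈ C \ {j'}} f {i} = f (C \ {j'})` for every `j' ∈ C`. -/
def Cset (n : ℕ) (f : Finset (Fin n) → ℕ) (j : ℕ) : Finset (Finset (Fin n)) :=
  Finset.univ.filter fun C => C.card = j ∧
    (∑ i ∈ C, (f {i} : ℤ)) - (f C : ℤ) = 1 ∧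
    ∀ j' ∈ C, (∑ i ∈ C.erase j', (f {i} : ℤ)) = (f (C.erase j') : ℤ)

/-- The dual rank function `f*(I) = f([n] \ I) - f([n]) + ∑_{i ∈ I} f {i}`
(the subtraction is exact for a polymatroid rank function). -/
def fdual (n : ℕ) (f : Finset (Fin n) → ℕ) : Finset (Fin n) → ℕ :=
  fun I => f (Finset.univ \ I) + (∑ i ∈ I, f {i}) - f Finset.univ

namespace Ext16

lemma mem_polyBases {n : ℕ} {f : Finset (Fin n) → ℕ} (hf : IsPolymatroidRank n f)
    (a : Fin n → ℤ) : a ∈ polyBases n f ↔ (∀ i, 0 ≤ a i) ∧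
      (∀ I : Finset (Fin n), ∑ i ∈ I, a i ≤ (f I : ℤ)) ∧ ∑ i, a i = (f Finset.univ : ℤ) := by
  unfold polyBases
  rw [Finset.mem_filter]
  constructor
  · exact fun h => h.2
  · intro h
    refine ⟨?_, h⟩
    rw [Finset.mem_image]
    refine ⟨fun i => ⟨(a i).toNat, ?_⟩, Finset.mem_univ _, ?_⟩
    · have h1 := h.2.1 {i}
      have h2 := hf.2.1 {i} univ (Finset.subset_univ _)
      simp only [Finset.sum_singleton] at h1
      omega
    · funext i
      have := h.1 i
      simp [this]

/-- Tight sets cover. -/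
lemma tight_cover {n : ℕ} {f : Finset (Fin n) → ℕ} (hf : IsPolymatroidRank n f)
    (a : Fin n → ℤ) (ha : ∀ I : Finset (Fin n), ∑ i ∈ I, a i ≤ (f I : ℤ))
    (U S : Finset (Fin n))
    (h : ∀ i ∈ S, ∃ T : Finset (Fin n), i ∈ T ∧ Disjoint T U ∧ ∑ i ∈ T, a i = (f T : ℤ)) :
    ∃ T : Finset (Fin n), S ⊆ T ∧ Disjoint T U ∧ ∑ i ∈ T, a i = (f T : ℤ) := by
  induction S using Finset.induction_on with
  | empty => exact ⟨∅, by simp, by simp, by simp [hf.1]⟩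
  | insert i S hi ih =>
    obtain ⟨T, hT1, hT2, hT3⟩ := ih (fun j hj => h j (Finset.mem_insert_of_mem hj))
    obtain ⟨V, hV1, hV2, hV3⟩ := h i (Finset.mem_insert_self _ _)
    refine ⟨V ∪ T, ?_, ?_, ?_⟩
    · intro x hx
      rcases Finset.mem_insert.1 hx with rfl | hx
      · exact Finset.mem_union_left _ hV1
      · exact Finset.mem_union_right _ (hT1 hx)
    · rw [Finset.disjoint_union_left]; exact ⟨hV2, hT2⟩
    · have h1 := Finset.sum_union_inter (s₁ := V) (s₂ := T) (f := a)
      have h2 := hf.2.2 V T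
      have h3 := ha (V ∪ T)
      have h4 := ha (V ∩ T)
      zify at h2
      linarith

lemma sum_exch {n : ℕ} (a : Fin n → ℤ) (i j : Fin n) (I : Finset (Fin n)) :
    ∑ t ∈ I, (a t + (if t = i then 1 else 0) - (if t = j then 1 else 0))
      = ∑ t ∈ I, a t + (if i ∈ I then 1 else 0) - (if j ∈ I then 1 else 0) := by
  rw [Finset.sum_sub_distrib, Finset.sum_add_distrib]
  simp

lemma sum_incr {n : ℕ} (a : Fin n → ℤ) (i : Fin n) (I : Finset (Fin n)) :
    ∑ t ∈ I, (a t + (if t = i then 1 else 0))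
      = ∑ t ∈ I, a t + (if i ∈ I then 1 else 0) := by
  rw [Finset.sum_add_distrib]
  simp

lemma exchange {n : ℕ} {f : Finset (Fin n) → ℕ} (hf : IsPolymatroidRank n f)
    (a b : Fin n → ℤ) (ha : a ∈ polyBases n f) (hb : b ∈ polyBases n f) (j : Fin n)
    (hj : b j < a j) : ∃ i, a i < b i ∧
      (fun t => a t + (if t = i then 1 else 0) - (if t = j then 1 else 0)) ∈ polyBases n f := by
  rw [mem_polyBases hf] at ha hb
  by_contra! hcon
  obtain ⟨T, hT1, hT2, hT3⟩ := tight_cover hf a ha.2.1 {j} (univ.filter fun i => a i < b i) (by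
    intro i hi
    have hi : a i < b i := by simpa using hi
    have hij : i ≠ j := by rintro rfl; omega
    have h := hcon i hi
    rw [mem_polyBases hf] at h
    by_contra! hno
    apply h
    refine ⟨?_, ?_, ?_⟩
    · intro t
      have h1 := ha.1 t
      have h2 := hb.1 t
      by_cases htj : t = j
      · subst htj
        simp only [hij.symm, if_false, if_true]
        omega
      · simp only [htj, if_false]
        split_ifs <;> omega
    · intro I
      rw [sum_exch]
      have h1 := ha.2.1 I
      have h2 := hno I
      by_cases hjI : j ∈ I
      · simp only [hjI, if_true]; split_ifs <;> omega
      · by_cases hiI : i ∈ I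
        · have := h2 hiI (by simpa using hjI)
          simp only [hjI, hiI, if_true, if_false]
          omega
        · simp only [hjI, hiI, if_false]; omega
    · rw [sum_exch]
      simp [ha.2.2])
  have hjT : j ∉ T := by simpa using hT2
  have h1 := Finset.sum_add_sum_compl T a
  have h2 := Finset.sum_add_sum_compl T b
  have h3 := hb.2.1 T
  have h4 : ∑ i ∈ Tᶜ, b i < ∑ i ∈ Tᶜ, a i := by
    apply Finset.sum_lt_sum
    · intro i hi
      by_contra! hlt
      exact (Finset.mem_compl.1 hi) (hT1 (by simpa using hlt))
    · exact ⟨j, by simpa using hjT, hj⟩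
  have := ha.2.2
  have := hb.2.2
  linarith

lemma exists_below {n : ℕ} {f : Finset (Fin n) → ℕ} (hf : IsPolymatroidRank n f)
    (c : Fin n → ℤ) (hc : ∀ i, 0 ≤ c i)
    (h : ∀ J : Finset (Fin n), (f univ : ℤ) - f Jᶜ ≤ ∑ i ∈ J, c i) :
    ∃ a ∈ polyBases n f, ∀ i, a i ≤ c i := by
  let S := (Fintype.piFinset fun i => Finset.Icc (0 : ℤ) (c i)).filter
    fun a => ∀ I : Finset (Fin n), ∑ i ∈ I, a i ≤ (f I : ℤ)
  have hS : S.Nonempty := ⟨fun _ => 0, by simp [S, hc]⟩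
  obtain ⟨a, haS, hmax⟩ := Finset.exists_max_image S (fun a => ∑ i, a i) hS
  have haS' := haS
  simp only [S, Finset.mem_filter, Fintype.mem_piFinset, Finset.mem_Icc] at haS'
  obtain ⟨hac, hai⟩ := haS'
  refine ⟨a, ?_, fun i => (hac i).2⟩
  obtain ⟨T, hT1, -, hT3⟩ := tight_cover hf a hai ∅ (univ.filter fun i => a i < c i) (by
    intro i hi
    have hi : a i < c i := by simpa using hi
    by_contra! hno
    have hm : (fun t => a t + (if t = i then 1 else 0)) ∈ S := by
      simp only [S, Finset.mem_filter, Fintype.mem_piFinset, Finset.mem_Icc]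
      refine ⟨?_, ?_⟩
      · intro t
        have := hac t
        by_cases hti : t = i
        · subst hti; simp only [if_true]; omega
        · simp only [hti, if_false]; omega
      · intro I
        rw [sum_incr]
        have h1 := hai I
        by_cases hiI : i ∈ I
        · have := hno I hiI (by simp)
          simp only [hiI, if_true]
          omega
        · simp only [hiI, if_false]; omega
    have := hmax _ hm
    simp only [sum_incr, Finset.mem_univ, if_true] at this
    omega)
  rw [mem_polyBases hf]
  refine ⟨fun i => (hac i).1, hai, ?_⟩
  have h1 := Finset.sum_add_sum_compl T a
  have h2 := h Tᶜ
  rw [compl_compl] at h2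
  have h4 : ∑ i ∈ Tᶜ, c i ≤ ∑ i ∈ Tᶜ, a i := by
    apply Finset.sum_le_sum
    intro i hi
    by_contra! hlt
    exact (Finset.mem_compl.1 hi) (hT1 (by simpa using hlt))
  have := hai univ
  linarith

/-- one-dimensional weight -/
noncomputable def w (r : ℕ) (z : ℤ) : ℤ[X] :=
  (1 - X) ^ z.toNat * (if z ≤ (r : ℤ) then X else 1)

/-- multi-dimensional weight -/
noncomputable def W (n r : ℕ) (c : Fin n → ℤ) : ℤ[X] := ∏ i, w r (c i)

lemma sum_w (r : ℕ) (k : ℕ) (hk : k ≤ r + 1) :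
    ∑ z ∈ Finset.Icc ((r + 1 - k : ℕ) : ℤ) (r + 1), w r z = (1 - X) ^ (r + 1 - k) := by
  induction k with
  | zero =>
    simp [w]
  | succ k ih =>
    have hlt : (r + 1 - (k + 1) : ℕ) < r + 1 := by omega
    have e : r + 1 - k = (r + 1 - (k + 1)) + 1 := by omega
    have h1 := ih (by omega)
    rw [e] at h1
    have : Finset.Icc ((r + 1 - (k + 1) : ℕ) : ℤ) (r + 1)
        = insert ((r + 1 - (k + 1) : ℕ) : ℤ)
          (Finset.Icc ((r + 1 - (k + 1) + 1 : ℕ) : ℤ) (r + 1)) := by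
      ext z; simp only [Finset.mem_insert, Finset.mem_Icc]; omega
    rw [this, Finset.sum_insert (by simp), h1, w, if_pos (by omega), Int.toNat_natCast]
    ring

lemma sum_w' (r : ℕ) (s : ℤ) (h0 : 0 ≤ s) (h1 : s ≤ r + 1) :
    ∑ z ∈ Finset.Icc s (r + 1), w r z = (1 - X) ^ s.toNat := by
  have h := sum_w r (r + 1 - s.toNat) (by omega)
  have e : r + 1 - (r + 1 - s.toNat) = s.toNat := by omega
  rw [e, Int.toNat_of_nonneg h0] at h
  exact h

/-- the full box -/
noncomputable def box (n r : ℕ) : Finset (Fin n → ℤ) :=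
  Fintype.piFinset fun _ => Finset.Icc (0 : ℤ) (r + 1)

lemma sum_box_zero (n r : ℕ) (J : Finset (Fin n)) :
    ∑ c ∈ (box n r).filter (fun c => ∀ i ∈ J, c i = 0), W n r c = X ^ J.card := by
  have : (box n r).filter (fun c => ∀ i ∈ J, c i = 0)
      = Fintype.piFinset fun i => if i ∈ J then {(0 : ℤ)} else Finset.Icc (0 : ℤ) (r + 1) := by
    ext c
    simp only [box, Finset.mem_filter, Fintype.mem_piFinset]
    constructor
    · rintro ⟨h1, h2⟩ i
      split_ifs with h
      · simpa using h2 i h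
      · exact h1 i
    · intro h
      refine ⟨fun i => ?_, fun i hi => ?_⟩
      · have := h i
        split_ifs at this with h
        · rw [Finset.mem_singleton] at this; rw [this]; simp; omega
        · exact this
      · simpa [hi] using h i
  rw [this]
  unfold W
  rw [← Finset.prod_univ_sum]
  have : ∀ i : Fin n, ∑ j ∈ (if i ∈ J then {(0 : ℤ)} else Finset.Icc (0 : ℤ) (r + 1)), w r j
      = if i ∈ J then X else 1 := by
    intro i
    split_ifs
    · simp [w]
    · rw [sum_w' r 0 le_rfl (by omega)]; simp
  rw [Finset.prod_congr rfl (fun i _ => this i)]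
  simp

/-- the box of a basis -/
noncomputable def bbox (n : ℕ) (f : Finset (Fin n) → ℕ) (a : Fin n → ℤ) : Finset (Fin n → ℤ) :=
  Fintype.piFinset fun i =>
    if i ∈ extAct n f a then Finset.Icc (a i) (f univ + 1) else {a i}

lemma sum_bbox {n : ℕ} {f : Finset (Fin n) → ℕ} (hf : IsPolymatroidRank n f)
    (a : Fin n → ℤ) (ha : a ∈ polyBases n f) :
    ∑ c ∈ bbox n f a, W n (f univ) c
      = (1 - X) ^ (f univ) * X ^ (n - (extAct n f a).card) := by
  rw [mem_polyBases hf] at ha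
  have hle : ∀ i, a i ≤ f univ := by
    intro i
    have h1 := ha.2.1 {i}
    have h2 := hf.2.1 {i} univ (Finset.subset_univ _)
    simp only [Finset.sum_singleton] at h1
    omega
  unfold W bbox
  rw [← Finset.prod_univ_sum]
  have : ∀ i : Fin n, ∑ j ∈ (if i ∈ extAct n f a then Finset.Icc (a i) (f univ + 1) else {a i}),
      w (f univ) j = (1 - X) ^ (a i).toNat * (if i ∈ extAct n f a then 1 else X) := by
    intro i
    split_ifs
    · rw [sum_w' _ _ (ha.1 i) (by have := hle i; omega)]; simp
    · simp [w, hle i]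
  rw [Finset.prod_congr rfl (fun i _ => this i), Finset.prod_mul_distrib,
    Finset.prod_pow_eq_pow_sum]
  congr 1
  · congr 1
    zify
    rw [← ha.2.2]
    exact Finset.sum_congr rfl (fun i _ => by exact Int.toNat_of_nonneg (ha.1 i))
  · rw [Finset.prod_ite]
    simp only [Finset.prod_const_one, one_mul, Finset.prod_const]
    congr 1
    have h := Finset.card_compl (extAct n f a)
    rw [Fintype.card_fin] at h
    rw [← h]
    congr 1
    ext i; simp

/-- canonical decomposition -/
lemma exteriorPoly_eq {n : ℕ} {f : Finset (Fin n) → ℕ} (hf : IsPolymatroidRank n f) :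
    (1 - X) ^ (f univ) * exteriorPoly n f
      = ∑ c ∈ (box n (f univ)).filter (fun c => ∃ a ∈ polyBases n f, ∀ i, a i ≤ c i),
          W n (f univ) c := by
  have hU : (box n (f univ)).filter (fun c => ∃ a ∈ polyBases n f, ∀ i, a i ≤ c i)
      = (polyBases n f).biUnion (bbox n f) := by
    ext c
    simp only [box, bbox, Finset.mem_filter, Fintype.mem_piFinset, Finset.mem_biUnion]
    constructor
    · rintro ⟨hc, a₀, ha₀, ha₀c⟩
      let S := (polyBases n f).filter fun a => ∀ i, a i ≤ c i
      have hS : S.Nonempty := ⟨a₀, by simp only [S, Finset.mem_filter]; exact ⟨ha₀, ha₀c⟩⟩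
      obtain ⟨a, haS, hmax⟩ := Finset.exists_max_image S (fun a => ∑ i, (i.val : ℤ) * a i) hS
      have haS' := haS
      simp only [S, Finset.mem_filter] at haS'
      refine ⟨a, haS'.1, fun i => ?_⟩
      have hci := hc i
      have hai := haS'.2 i
      rw [Finset.mem_Icc] at hci
      split_ifs with hi
      · rw [Finset.mem_Icc]; omega
      · rw [Finset.mem_singleton]
        by_contra hne
        simp only [extAct, Finset.mem_filter, Finset.mem_univ, true_and] at hi
        push Not at hi
        obtain ⟨j, hji, hj⟩ := hi
        have hm : (fun t => a t + (if t = i then 1 else 0) - (if t = j then 1 else 0)) ∈ S := by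
          simp only [S, Finset.mem_filter]
          refine ⟨hj, fun t => ?_⟩
          have := haS'.2 t
          by_cases hti : t = i
          · subst hti; simp only [if_true]; split_ifs <;> omega
          · simp only [hti, if_false]; split_ifs <;> omega
        have := hmax _ hm
        simp only [mul_sub, mul_add, Finset.sum_sub_distrib, Finset.sum_add_distrib,
          mul_ite, mul_one, mul_zero, Finset.sum_ite_eq', Finset.mem_univ, if_true] at this
        have hji' : j.val < i.val := hji
        omega
    · rintro ⟨a, ha, hc⟩
      have hle : ∀ i, a i ≤ c i := by
        intro i
        have := hc i
        split_ifs at this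
        · exact (Finset.mem_Icc.1 this).1
        · rw [Finset.mem_singleton] at this; omega
      refine ⟨fun i => ?_, a, ha, hle⟩
      have ha' := (mem_polyBases hf a).1 ha
      have h0 := ha'.1 i
      have h1 := ha'.2.1 {i}
      have h2 := hf.2.1 {i} univ (Finset.subset_univ _)
      simp only [Finset.sum_singleton] at h1
      have := hc i
      rw [Finset.mem_Icc]
      split_ifs at this
      · rw [Finset.mem_Icc] at this; omega
      · rw [Finset.mem_singleton] at this; omega
  have key : ∀ a ∈ polyBases n f, ∀ b ∈ polyBases n f, ∀ c, c ∈ bbox n f a → c ∈ bbox n f b →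
      ∀ j, (∀ i < j, a i = b i) → ¬ b j < a j := by
    intro a ha b hb c hca hcb j hj hlt
    obtain ⟨i, hi, hmem⟩ := exchange hf a b ha hb j hlt
    have hji : j < i := by
      rcases lt_trichotomy i j with h | h | h
      · have := hj i h; omega
      · subst h; omega
      · exact h
    simp only [bbox, Fintype.mem_piFinset] at hca hcb
    have h1 := hca i
    have h2 := hcb i
    split_ifs at h1 with h
    · simp only [extAct, Finset.mem_filter, Finset.mem_univ, true_and] at h
      exact h j hji hmem
    · rw [Finset.mem_singleton] at h1
      split_ifs at h2
      · rw [Finset.mem_Icc] at h2; omega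
      · rw [Finset.mem_singleton] at h2; omega
  rw [hU, Finset.sum_biUnion]
  · unfold exteriorPoly
    rw [Finset.mul_sum]
    exact Finset.sum_congr rfl (fun a ha => (sum_bbox hf a ha).symm)
  · intro a ha b hb hab
    rw [Function.onFun, Finset.disjoint_left]
    intro c hca hcb
    apply hab
    by_contra hne
    have hex : (univ.filter fun i => a i ≠ b i).Nonempty := by
      obtain ⟨i, hi⟩ := Function.ne_iff.1 hne
      exact ⟨i, by simpa using hi⟩
    obtain ⟨j, hj, hmin⟩ := Finset.exists_min_image _ id hex
    simp only [Finset.mem_filter, Finset.mem_univ, true_and, id] at hj hmin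
    have heq : ∀ i < j, a i = b i := by
      intro i hi
      by_contra h
      exact absurd (hmin i h) (not_le.2 hi)
    have h1 := key a ha b hb c hca hcb j heq
    have h2 := key b hb a ha c hcb hca j (fun i hi => (heq i hi).symm)
    omega

/-- complements of hyperplanes -/
def cohyp (n : ℕ) (f : Finset (Fin n) → ℕ) : Finset (Finset (Fin n)) :=
  univ.filter fun J => f Jᶜ < f univ ∧ ∀ K, K ⊆ J → f Kᶜ < f univ → K = J

lemma le_of_card_lt_rk {n : ℕ} {f : Finset (Fin n) → ℕ} (J : Finset (Fin n))
    (h : J.card < rk n f 2) : f univ ≤ f Jᶜ + 1 := by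
  by_contra! hlt
  have : rk n f 2 ≤ n - (Jᶜ).card := Nat.sInf_le ⟨Jᶜ, by push_cast; omega, rfl⟩
  have h1 := Finset.card_add_card_compl J
  rw [Fintype.card_fin] at h1
  omega

lemma count_eq {n : ℕ} {f : Finset (Fin n) → ℕ} (hf : IsPolymatroidRank n f)
    (c : Fin n → ℤ) (hc : ∀ i, 0 ≤ c i)
    (hI : (univ.filter fun i => c i ≤ f univ).card < rk n f 2) :
    ((cohyp n f).filter fun J => ∀ i ∈ J, c i = 0).card
      = if ∃ a ∈ polyBases n f, ∀ i, a i ≤ c i then 0 else 1 := by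
  have hsub : ∀ J : Finset (Fin n), (∀ i ∈ J, c i ≤ f univ) → f univ ≤ f Jᶜ + 1 := by
    intro J hJ
    apply le_of_card_lt_rk
    refine lt_of_le_of_lt (Finset.card_le_card ?_) hI
    intro i hi
    simpa using hJ i hi
  split_ifs with hgood
  · obtain ⟨a, ha, hac⟩ := hgood
    rw [mem_polyBases hf] at ha
    rw [Finset.card_eq_zero, Finset.filter_eq_empty_iff]
    intro J hJ hz
    simp only [cohyp, Finset.mem_filter, Finset.mem_univ, true_and] at hJ
    have h1 := Finset.sum_add_sum_compl J a
    have h2 : ∑ i ∈ J, a i = 0 := Finset.sum_eq_zero fun i hi => by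
      have := hz i hi; have := ha.1 i; have := hac i; omega
    have h3 := ha.2.1 Jᶜ
    have := ha.2.2
    omega
  · rw [Finset.card_eq_one]
    have hbad : ∃ J : Finset (Fin n), ∑ i ∈ J, c i < (f univ : ℤ) - f Jᶜ := by
      by_contra! h
      exact hgood (exists_below hf c hc h)
    obtain ⟨J, hJ⟩ := hbad
    have hle : ∀ i ∈ J, c i ≤ ∑ i ∈ J, c i := fun i hi =>
      Finset.single_le_sum (f := c) (fun i _ => hc i) hi
    have h1 := hsub J (fun i hi => by have := hle i hi; omega)
    have hz : ∀ i ∈ J, c i = 0 := fun i hi => by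
      have := hle i hi; have := hc i; omega
    have h0 : 0 ≤ ∑ i ∈ J, c i := Finset.sum_nonneg fun i _ => hc i
    have hJ' : f Jᶜ < f univ := by omega
    obtain ⟨K, hK, hKmin⟩ := Finset.exists_min_image
      (J.powerset.filter fun K => f Kᶜ < f univ) Finset.card ⟨J, by simp [hJ']⟩
    simp only [Finset.mem_filter, Finset.mem_powerset] at hK hKmin
    have hKm : K ∈ cohyp n f := by
      simp only [cohyp, Finset.mem_filter, Finset.mem_univ, true_and]
      refine ⟨hK.2, fun L hL hL' => ?_⟩
      exact Finset.eq_of_subset_of_card_le hL (hKmin L ⟨hL.trans hK.1, hL'⟩)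
    refine ⟨K, ?_⟩
    rw [Finset.eq_singleton_iff_unique_mem]
    refine ⟨Finset.mem_filter.2 ⟨hKm, fun i hi => hz i (hK.1 hi)⟩, ?_⟩
    intro L hL
    rw [Finset.mem_filter] at hL
    obtain ⟨hLm, hLz⟩ := hL
    simp only [cohyp, Finset.mem_filter, Finset.mem_univ, true_and] at hLm hKm
    have h2 := hsub (L ∪ K) (by
      intro i hi
      rcases Finset.mem_union.1 hi with h | h
      · rw [hLz i h]; omega
      · rw [hz i (hK.1 h)]; omega)
    have h3 := hf.2.2 Lᶜ Kᶜ
    rw [← Finset.compl_inter, ← Finset.compl_union] at h3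
    have h4 : f (L ∩ K)ᶜ < f univ := by omega
    have e1 := hLm.2 _ Finset.inter_subset_left h4
    have e2 := hKm.2 _ Finset.inter_subset_right h4
    rw [← e1, e2]

lemma dvd_main {n : ℕ} {f : Finset (Fin n) → ℕ} (hf : IsPolymatroidRank n f) :
    (X : ℤ[X]) ^ (rk n f 2) ∣ (1 - X) ^ (f univ) * exteriorPoly n f
      - (1 - ∑ J ∈ cohyp n f, X ^ J.card) := by
  classical
  have h1 : ∑ c ∈ box n (f univ), W n (f univ) c = 1 := by
    have := sum_box_zero n (f univ) ∅
    simpa using this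
  have h2 : ∑ J ∈ cohyp n f, (X : ℤ[X]) ^ J.card
      = ∑ c ∈ box n (f univ),
        (((cohyp n f).filter fun J => ∀ i ∈ J, c i = 0).card : ℤ[X]) * W n (f univ) c := by
    rw [Finset.sum_congr rfl (fun J _ => (sum_box_zero n (f univ) J).symm)]
    simp only [Finset.sum_filter]
    rw [Finset.sum_comm]
    refine Finset.sum_congr rfl fun c _ => ?_
    rw [← Finset.sum_filter, Finset.sum_const, nsmul_eq_mul]
  rw [exteriorPoly_eq hf, h2, ← h1, Finset.sum_filter, ← Finset.sum_sub_distrib,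
    ← Finset.sum_sub_distrib]
  refine Finset.dvd_sum fun c hc => ?_
  have hc0 : ∀ i, 0 ≤ c i := fun i => (Finset.mem_Icc.1 (Fintype.mem_piFinset.1 hc i)).1
  by_cases hI : (univ.filter fun i => c i ≤ f univ).card < rk n f 2
  · rw [count_eq hf c hc0 hI]
    split_ifs <;> simp
  · have hW : (X : ℤ[X]) ^ (rk n f 2) ∣ W n (f univ) c := by
      refine (pow_dvd_pow X (not_lt.1 hI)).trans ?_
      unfold W w
      rw [Finset.prod_mul_distrib]
      apply Dvd.dvd.mul_left
      rw [Finset.prod_ite]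
      simp
    refine dvd_sub ?_ (dvd_sub hW (hW.mul_left _))
    split_ifs
    · exact hW
    · exact dvd_zero _

lemma choose_step (s i m : ℕ) (hm : m ≤ i) :
    (s + i + 1) * (s + (i - m)).choose s ≤ (i + 1) * (s + (i + 1 - m)).choose s := by
  obtain ⟨k, rfl⟩ := Nat.exists_eq_add_of_le hm
  have e1 : m + k - m = k := by omega
  have e2 : m + k + 1 - m = k + 1 := by omega
  rw [e1, e2]
  have h := Nat.add_one_mul_choose_eq (s + k) k
  have a1 : (s + k).choose k = (s + k).choose s := by
    rw [Nat.choose_symm_add]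
  have a2 : (s + k + 1).choose (k + 1) = (s + (k + 1)).choose s := by
    rw [add_assoc, Nat.choose_symm_add]
  rw [a1, a2] at h
  set A := (s + k).choose s
  set B := (s + (k + 1)).choose s
  have hAB : A ≤ B := Nat.choose_le_choose s (by omega)
  nlinarith

lemma dstep {α : Type*} (s : ℕ) (M : Finset α) (g : α → ℕ) (i : ℕ)
    (h : ((s + i).choose s : ℤ) - ∑ J ∈ M,
      (if g J ≤ i then ((s + (i - g J)).choose s : ℤ) else 0) ≤ 0) :
    ((s + (i + 1)).choose s : ℤ) - ∑ J ∈ M,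
      (if g J ≤ i + 1 then ((s + (i + 1 - g J)).choose s : ℤ) else 0) ≤ 0 := by
  have h1 : ((i : ℤ) + 1) * ((s + (i + 1)).choose s : ℤ)
      = (s + i + 1) * ((s + i).choose s : ℤ) := by
    have h := Nat.add_one_mul_choose_eq (s + i) i
    have a1 : (s + i).choose i = (s + i).choose s := by
      rw [Nat.choose_symm_add]
    have a2 : (s + i + 1).choose (i + 1) = (s + (i + 1)).choose s := by
      rw [add_assoc, Nat.choose_symm_add]
    rw [a1, a2] at h
    zify at h
    linarith
  have h2 : (s + i + 1 : ℤ) * ∑ J ∈ M,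
      (if g J ≤ i then ((s + (i - g J)).choose s : ℤ) else 0)
      ≤ ((i : ℤ) + 1) * ∑ J ∈ M,
      (if g J ≤ i + 1 then ((s + (i + 1 - g J)).choose s : ℤ) else 0) := by
    rw [Finset.mul_sum, Finset.mul_sum]
    refine Finset.sum_le_sum fun J _ => ?_
    by_cases hJ : g J ≤ i
    · rw [if_pos hJ, if_pos (by omega)]
      exact_mod_cast choose_step s i (g J) hJ
    · rw [if_neg hJ, mul_zero]
      split_ifs <;> positivity
  have h3 : ((i : ℤ) + 1) * (((s + (i + 1)).choose s : ℤ) - ∑ J ∈ M,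
      (if g J ≤ i + 1 then ((s + (i + 1 - g J)).choose s : ℤ) else 0)) ≤ 0 := by
    have h4 : (s + i + 1 : ℤ) * (((s + i).choose s : ℤ) - ∑ J ∈ M,
      (if g J ≤ i then ((s + (i - g J)).choose s : ℤ) else 0)) ≤ 0 :=
      mul_nonpos_of_nonneg_of_nonpos (by positivity) h
    rw [mul_sub] at h4 ⊢
    linarith
  by_contra! hpos
  have : (0 : ℤ) < (i : ℤ) + 1 := by positivity
  nlinarith

lemma coeff_diff {n : ℕ} {f : Finset (Fin n) → ℕ} (hf : IsPolymatroidRank n f) (s : ℕ)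
    (hs : f univ = s + 2) (i : ℕ) (hi : i + 1 < rk n f 2) :
    (exteriorPoly n f).coeff (i + 1) - (exteriorPoly n f).coeff i
      = ((s + (i + 1)).choose s : ℤ) - ∑ J ∈ cohyp n f,
        (if J.card ≤ i + 1 then ((s + (i + 1 - J.card)).choose s : ℤ) else 0) := by
  obtain ⟨q, hq⟩ := dvd_main hf
  set p := exteriorPoly n f
  have hP : (1 - PowerSeries.X : PowerSeries ℤ) ^ (s + 2) * (p : PowerSeries ℤ)
      = (1 - ∑ J ∈ cohyp n f, PowerSeries.X ^ J.card)
        + PowerSeries.X ^ (rk n f 2) * (q : PowerSeries ℤ) := by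
    have h := congrArg (Polynomial.coeToPowerSeries.ringHom (R := ℤ)) hq
    simp only [map_sub, map_mul, map_pow, map_one, map_sum,
      Polynomial.coeToPowerSeries.ringHom_apply, Polynomial.coe_X] at h
    rw [hs] at h
    rw [← h]; ring
  have hinv : (PowerSeries.mk fun k => ((s + k).choose s : ℤ)) * (1 - PowerSeries.X) ^ (s + 1) = 1 :=
    PowerSeries.mk_add_choose_mul_one_sub_pow_eq_one ℤ s
  set V : PowerSeries ℤ := PowerSeries.mk fun k => ((s + k).choose s : ℤ)
  have hD : (1 - PowerSeries.X : PowerSeries ℤ) * (p : PowerSeries ℤ)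
      = (V - ∑ J ∈ cohyp n f, PowerSeries.X ^ J.card * V)
        + PowerSeries.X ^ (rk n f 2) * (V * (q : PowerSeries ℤ)) := by
    have : (1 - PowerSeries.X : PowerSeries ℤ) * (p : PowerSeries ℤ)
        = V * ((1 - PowerSeries.X : PowerSeries ℤ) ^ (s + 2) * (p : PowerSeries ℤ)) := by
      calc _ = (V * (1 - PowerSeries.X) ^ (s + 1))
            * ((1 - PowerSeries.X : PowerSeries ℤ) * (p : PowerSeries ℤ)) := by rw [hinv, one_mul]
        _ = _ := by ring
    rw [this, hP, ← Finset.sum_mul]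
    ring
  have hc := congrArg (PowerSeries.coeff (i + 1)) hD
  rw [sub_mul, one_mul, map_sub, map_add, map_sub, map_sum, PowerSeries.coeff_succ_X_mul,
    PowerSeries.coeff_X_pow_mul', if_neg (by omega), add_zero, Polynomial.coeff_coe,
    Polynomial.coeff_coe] at hc
  rw [hc]
  simp only [PowerSeries.coeff_X_pow_mul', V, PowerSeries.coeff_mk]

end Ext16

/-- The sequence `[y^0]X_P(y), …, [y^{r_2(P)-1}]X_P(y)` is unimodal. -/
theorem stmt16 (n : ℕ) (f : Finset (Fin n) → ℕ) (hf : IsPolymatroidRank n f) :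
    ∃ k : ℕ,
      (∀ i : ℕ, i < k → i + 1 ≤ rk n f 2 - 1 →
        (exteriorPoly n f).coeff i ≤ (exteriorPoly n f).coeff (i + 1)) ∧
      (∀ i : ℕ, k < i → i + 1 ≤ rk n f 2 - 1 →
        (exteriorPoly n f).coeff (i + 1) ≤ (exteriorPoly n f).coeff i) := by
  by_cases hr : f univ < 2
  · have h0 : rk n f 2 = 0 := by
      unfold rk
      rw [Nat.sInf_eq_zero]
      right
      rw [Set.eq_empty_iff_forall_notMem]
      rintro m ⟨F, hF, -⟩
      push_cast at hF
      omega
    exact ⟨0, fun i _ h => by omega, fun i _ h => by omega⟩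
  · obtain ⟨s, hs⟩ : ∃ s, f univ = s + 2 := ⟨f univ - 2, by omega⟩
    have step : ∀ i, i + 1 + 1 ≤ rk n f 2 - 1 →
        (exteriorPoly n f).coeff (i + 1) ≤ (exteriorPoly n f).coeff i →
        (exteriorPoly n f).coeff (i + 1 + 1) ≤ (exteriorPoly n f).coeff (i + 1) := by
      intro i hi h
      have e1 := Ext16.coeff_diff hf s hs i (by omega)
      have e2 := Ext16.coeff_diff hf s hs (i + 1) (by omega)
      have := Ext16.dstep s (Ext16.cohyp n f) Finset.card (i + 1) (by rw [← e1]; linarith)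
      linarith
    by_cases hex : ∃ k, k + 1 ≤ rk n f 2 - 1 ∧
        (exteriorPoly n f).coeff (k + 1) < (exteriorPoly n f).coeff k
    · classical
      refine ⟨Nat.find hex, ?_, ?_⟩
      · intro i hi hi'
        have := Nat.find_min hex hi
        push Not at this
        exact this hi'
      · intro i hi
        obtain ⟨h1, h2⟩ := Nat.find_spec hex
        induction i, hi.le using Nat.le_induction with
        | base => exact fun _ => h2.le
        | succ m hm ih =>
          intro hm'
          apply step m hm'
          rcases hm.lt_or_eq with h | h
          · exact ih h (by omega)
          · rw [← h]; exact h2.le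
    · push Not at hex
      exact ⟨rk n f 2, fun i _ h => hex i h, fun i h1 h2 => by omega⟩
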